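/- arXiv:1807.07829 — 4 statements merged into one kernel-verified Lean document; each statement's English description precedes it below -/
import Mathlib

section
/- Every local-hidden-state model for steering from Alice to Bob with N measurement settings and d outcomes satisfies S_E := Σ_{x=1}^N Σ_{a=1}^d Σ_{λ∈Λ} p(λ) p_λ(a|x) ⟨φ_x^a, σ_λ φ_x^a⟩ ≤ s_N^B, where {φ_x^a} are Bob's orthonormal measurement bases and s_N^B is the maximal operator norm of a sum of N distinct projectors |φ_{x_i}^{a_i}⟩⟨φ_{x_i}^{a_i}|. -/
/-! For a fixed hidden variable, the functional is, for every setting `x`, a convex combination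
of the numbers `⟨φ_x^a, σ φ_x^a⟩`, hence at most their maximum, attained at some `f x`. The `N`
pairs `(x, f x)` are distinct, so the sum of these maxima is `tr(M σ)` for a sum `M` of `N`
distinct projectors. Since `tr(M σ) ≤ ‖M‖` for every density matrix `σ`
(`re_trace_mul_le_opNorm`), each hidden variable contributes at most `s_N^B`
(`deterministic_le_sMax`), and averaging over the hidden variable preserves the bound. -/

open scoped ComplexOrder

noncomputable section

/-- `|v⟩⟨v|`, the rank-one projection matrix associated with the vector `v`. -/
def rankOneProj {n : Type*} [Fintype n] (v : n → ℂ) : Matrix n n ℂ :=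
  Matrix.vecMulVec v (star v)

/-- The operator (spectral) norm of a complex matrix. -/
def opNorm {n : Type*} [Fintype n] [DecidableEq n] (M : Matrix n n ℂ) : ℝ :=
  ‖Matrix.toEuclideanCLM (𝕜 := ℂ) (n := n) M‖

/-- A density matrix: positive semidefinite with unit trace. -/
def IsDensityMatrix {n : Type*} [Fintype n] [DecidableEq n] (ρ : Matrix n n ℂ) : Prop :=
  ρ.PosSemidef ∧ ρ.trace = 1

/-- `s_k^B` : the maximal operator norm of a sum of `k` distinct projectors
`|φ_x^a⟩⟨φ_x^a|` drawn from Bob's measurement eigenvectors. -/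
def sMax {N d : ℕ} (φ : Fin N → Fin d → (Fin d → ℂ)) (k : ℕ) : ℝ :=
  sSup { r : ℝ | ∃ T : Finset (Fin N × Fin d), T.card = k ∧
    r = opNorm (∑ q ∈ T, rankOneProj (φ q.1 q.2)) }

/-- A quadratic form is bounded by the operator norm (Cauchy–Schwarz). -/
lemma re_dotProduct_mulVec_le {n : Type*} [Fintype n] [DecidableEq n] (M : Matrix n n ℂ)
    (w : n → ℂ) :
    (star w ⬝ᵥ M.mulVec w).re ≤ opNorm M * (star w ⬝ᵥ w).re := by
  have h1 : star w ⬝ᵥ M.mulVec w =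
      inner ℂ (WithLp.toLp 2 w) (Matrix.toEuclideanCLM (𝕜 := ℂ) (n := n) M (WithLp.toLp 2 w)) := by
    rw [Matrix.toEuclideanCLM_toLp, EuclideanSpace.inner_toLp_toLp, dotProduct_comm]
  have h2 : (star w ⬝ᵥ w).re = ‖WithLp.toLp 2 w‖ ^ 2 := by
    rw [← inner_self_eq_norm_sq (𝕜 := ℂ), EuclideanSpace.inner_toLp_toLp, dotProduct_comm]
    rfl
  rw [h1, h2, opNorm]
  refine (Complex.re_le_norm _).trans ((norm_inner_le_norm _ _).trans ?_)
  have := (Matrix.toEuclideanCLM (𝕜 := ℂ) (n := n) M).le_opNorm (WithLp.toLp 2 w)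
  nlinarith [norm_nonneg (WithLp.toLp 2 w)]

open scoped MatrixOrder Matrix.Norms.L2Operator in
/-- Writing `ρ = Bᴴ B` turns `tr(M ρ)` into a sum of quadratic forms of `M` over the conjugated
rows of `B`, whose squared norms add up to `tr ρ = 1`. -/
lemma re_trace_mul_le_opNorm {n : Type*} [Fintype n] [DecidableEq n] (M ρ : Matrix n n ℂ)
    (hρ : IsDensityMatrix ρ) : (Matrix.trace (M * ρ)).re ≤ opNorm M := by
  obtain ⟨hpos, htr⟩ := hρ
  obtain ⟨B, rfl⟩ := CStarAlgebra.nonneg_iff_eq_star_mul_self.mp hpos.nonneg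
  have h1 : Matrix.trace (M * (star B * B)) =
      ∑ i, star (star (B i)) ⬝ᵥ M.mulVec (star (B i)) := by
    rw [← Matrix.mul_assoc, Matrix.trace_mul_comm]
    simp only [Matrix.trace, Matrix.diag_apply, star_star]
    rfl
  have h2 : ∑ i, (star (star (B i)) ⬝ᵥ star (B i)).re = 1 := by
    rw [← Complex.re_sum, ← Complex.one_re, ← htr, Matrix.trace_mul_comm]
    simp only [Matrix.trace, Matrix.diag_apply, star_star]
    rfl
  rw [h1, Complex.re_sum, ← mul_one (opNorm M), ← h2, Finset.mul_sum]
  exact Finset.sum_le_sum fun i _ => re_dotProduct_mulVec_le M _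

lemma opNorm_le_sMax {N d : ℕ} (φ : Fin N → Fin d → (Fin d → ℂ))
    (T : Finset (Fin N × Fin d)) :
    opNorm (∑ q ∈ T, rankOneProj (φ q.1 q.2)) ≤ sMax φ T.card := by
  refine le_csSup (Set.Finite.bddAbove ?_) ⟨T, rfl, rfl⟩
  refine (Set.finite_range fun T : Finset (Fin N × Fin d) =>
    opNorm (∑ q ∈ T, rankOneProj (φ q.1 q.2))).subset ?_
  rintro r ⟨T, -, rfl⟩
  exact ⟨T, rfl⟩

/-- The bound for deterministic responses `x ↦ f x`: the graph of `f` is a set of `N` distinct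
index pairs. -/
lemma deterministic_le_sMax {N d : ℕ} (φ : Fin N → Fin d → (Fin d → ℂ))
    (ρ : Matrix (Fin d) (Fin d) ℂ) (hρ : IsDensityMatrix ρ) (f : Fin N → Fin d) :
    ∑ x, (Matrix.trace (rankOneProj (φ x (f x)) * ρ)).re ≤ sMax φ N := by
  let e : Fin N ↪ Fin N × Fin d := ⟨fun x => (x, f x), fun _ _ h => congrArg Prod.fst h⟩
  have h := (re_trace_mul_le_opNorm _ ρ hρ).trans (opNorm_le_sMax φ (Finset.univ.map e))
  rw [Finset.card_map, Finset.card_univ, Fintype.card_fin, Finset.sum_map, Finset.sum_mul,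
    Matrix.trace_sum, Complex.re_sum] at h
  exact h

/-- **Theorem 1 (steering inequality).**  Every local-hidden-state model for steering from
Alice to Bob satisfies `S_E ≤ s_N^B`. -/
theorem steering_functional_le
    (N d : ℕ) (hN : 1 ≤ N) (hd : 1 ≤ d)
    (φ : Fin N → Fin d → (Fin d → ℂ))
    (hφ : ∀ x a b, (∑ i, (starRingEnd ℂ) (φ x a i) * φ x b i) =
      if a = b then 1 else 0)
    (Λ : Type) [Fintype Λ]
    (p : Λ → ℝ) (hp : ∀ l, 0 ≤ p l) (hpsum : ∑ l, p l = 1)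
    (resp : Λ → Fin N → Fin d → ℝ)
    (hresp : ∀ l x a, 0 ≤ resp l x a ∧ resp l x a ≤ 1)
    (hrespsum : ∀ l x, ∑ a, resp l x a = 1)
    (σ : Λ → Matrix (Fin d) (Fin d) ℂ) (hσ : ∀ l, IsDensityMatrix (σ l)) :
    (∑ x, ∑ a, ∑ l, p l * resp l x a *
        (Matrix.trace (rankOneProj (φ x a) * σ l)).re) ≤ sMax φ N := by
  have key : ∀ l, ∑ x, ∑ a, resp l x a * (Matrix.trace (rankOneProj (φ x a) * σ l)).re
      ≤ sMax φ N := by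
    intro l
    have : Nonempty (Fin d) := ⟨⟨0, hd⟩⟩
    choose f hf using fun x => Finite.exists_max
      fun a => (Matrix.trace (rankOneProj (φ x a) * σ l)).re
    refine le_trans (Finset.sum_le_sum fun x _ => ?_) (deterministic_le_sMax φ (σ l) (hσ l) f)
    calc ∑ a, resp l x a * (Matrix.trace (rankOneProj (φ x a) * σ l)).re
        ≤ ∑ a, resp l x a * (Matrix.trace (rankOneProj (φ x (f x)) * σ l)).re :=
          Finset.sum_le_sum fun a _ => mul_le_mul_of_nonneg_left (hf x a) (hresp l x a).1
      _ = _ := by rw [← Finset.sum_mul, hrespsum, one_mul]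
  calc ∑ x, ∑ a, ∑ l, p l * resp l x a * (Matrix.trace (rankOneProj (φ x a) * σ l)).re
      = ∑ l, p l * ∑ x, ∑ a, resp l x a * (Matrix.trace (rankOneProj (φ x a) * σ l)).re := by
        simp_rw [Finset.mul_sum, ← mul_assoc]
        rw [Finset.sum_comm (s := (Finset.univ : Finset Λ))]
        exact Finset.sum_congr rfl fun x _ => Finset.sum_comm
    _ ≤ ∑ l, p l * sMax φ N :=
        Finset.sum_le_sum fun l _ => mul_le_mul_of_nonneg_left (key l) (hp l)
    _ = sMax φ N := by rw [← Finset.sum_mul, hpsum, one_mul]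
end
end

section
/- Let p, q, w ∈ ℝ^n have all entries nonnegative, and suppose p is weakly submajorized by w, i.e., for every k = 1,…,n the sum of the k largest entries of p is at most the sum of the k largest entries of w. Then Σ_{i=1}^n p_i q_i ≤ Σ_{i=1}^n w↓_i q↓_i, where v↓ denotes the decreasing rearrangement of v. -/
/-!
By the rearrangement inequality `∑ pᵢ qᵢ ≤ ∑ p↓ᵢ q↓ᵢ`, since sorted vectors vary together
(`sum_mul_le_sum_dSort`). It remains to replace `p↓` by `w↓`: the difference `w↓ - p↓` has
nonnegative partial sums, so by summation by parts its inner product with the nonnegative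
nonincreasing vector `q↓` is nonnegative (`sum_mul_nonneg_of_partial_sums`).
-/

noncomputable section

/-- The decreasing rearrangement of a real vector. -/
def dSort {n : ℕ} (v : Fin n → ℝ) : Fin n → ℝ := fun i => v (Tuple.sort v i.rev)

/-- The sum of the `k` largest entries of a real vector. -/
def topSum {n : ℕ} (v : Fin n → ℝ) (k : ℕ) : ℝ :=
  ∑ i ∈ Finset.univ.filter (fun i : Fin n => (i : ℕ) < k), dSort v i

theorem dSort_antitone {n : ℕ} (v : Fin n → ℝ) : Antitone (dSort v) := fun _ _ hij =>
  Tuple.monotone_sort v (Fin.rev_le_rev.mpr hij)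

/-- The permutation `σ` with `dSort v = v ∘ σ`. -/
def dPerm {n : ℕ} (v : Fin n → ℝ) : Equiv.Perm (Fin n) := Fin.revPerm.trans (Tuple.sort v)

theorem dSort_eq {n : ℕ} (v : Fin n → ℝ) (i : Fin n) : dSort v i = v (dPerm v i) := rfl

/-- The rearrangement inequality for decreasing rearrangements. -/
theorem sum_mul_le_sum_dSort {n : ℕ} (p q : Fin n → ℝ) :
    ∑ i, p i * q i ≤ ∑ i, dSort p i * dSort q i := by
  have hmono : Monovary (dSort p) (dSort q) :=
    (dSort_antitone p).monovary (dSort_antitone q)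
  have h := hmono.sum_comp_perm_mul_le_sum_mul (σ := (dPerm q).trans (dPerm p).symm)
  rw [← Equiv.sum_comp (dPerm q) (fun i => p i * q i)]
  simpa [dSort_eq] using h

/-- Abel summation: nonnegative partial sums paired with nonnegative nonincreasing weights. -/
theorem sum_mul_nonneg_of_partial_sums {n : ℕ} (d b : Fin n → ℝ) (hb : Antitone b)
    (hb0 : ∀ i, 0 ≤ b i)
    (hd : ∀ k ≤ n, 0 ≤ ∑ i ∈ Finset.univ.filter (fun i : Fin n => (i : ℕ) < k), d i) :
    0 ≤ ∑ i, d i * b i := by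
  induction n with
  | zero => simp
  | succ n ih =>
    -- Subtracting the constant `b (last n)` kills the last weight and keeps the others
    -- nonnegative and nonincreasing.
    have key : ∑ i, d i * b i =
        ∑ i : Fin n, d i.castSucc * (b i.castSucc - b (Fin.last n))
          + (∑ i, d i) * b (Fin.last n) := by
      simp only [Fin.sum_univ_castSucc, mul_sub, Finset.sum_sub_distrib, ← Finset.sum_mul]
      ring
    rw [key]
    have htot : 0 ≤ ∑ i, d i := by
      have h := hd (n + 1) le_rfl
      rwa [Finset.filter_true_of_mem (fun i _ => i.isLt)] at h
    refine add_nonneg (ih (fun i => d i.castSucc) (fun i => b i.castSucc - b (Fin.last n))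
      ?_ ?_ ?_) (mul_nonneg htot (hb0 _))
    · intro i j hij
      exact sub_le_sub_right (hb (Fin.castSucc_le_castSucc_iff.mpr hij)) _
    · exact fun i => sub_nonneg.mpr (hb (Fin.le_last _))
    · intro k hk
      have h := hd k (by omega)
      rw [Finset.sum_filter, Fin.sum_univ_castSucc] at h
      simpa [Finset.sum_filter, not_lt.mpr hk] using h

/-- **Majorization inequality.** If `p` is weakly submajorized by `w`, then
`Σ pᵢ qᵢ ≤ Σ w↓ᵢ q↓ᵢ` for nonnegative vectors. -/
theorem inner_le_of_weakSubmajorize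
    (n : ℕ) (p q w : Fin n → ℝ)
    (hp : ∀ i, 0 ≤ p i) (hq : ∀ i, 0 ≤ q i) (hw : ∀ i, 0 ≤ w i)
    (hmaj : ∀ k, 1 ≤ k → k ≤ n → topSum p k ≤ topSum w k) :
    ∑ i, p i * q i ≤ ∑ i, dSort w i * dSort q i := by
  refine (sum_mul_le_sum_dSort p q).trans ?_
  have h := sum_mul_nonneg_of_partial_sums (fun i => dSort w i - dSort p i) (dSort q)
    (dSort_antitone q) (fun i => hq _) (by
      intro k hk
      rw [Finset.sum_sub_distrib, sub_nonneg]
      -- The hypothesis starts at `k = 1`; for `k = 0` both partial sums are empty.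
      rcases Nat.eq_zero_or_pos k with rfl | hk0
      · simp
      · exact hmaj k hk0 hk)
  simpa [sub_mul, Finset.sum_sub_distrib, sub_nonneg] using h
end
end

section
/- Let p ∈ ℝ with 1/√2 < p ≤ 1. Define the 2×2 matrices σ_1^+ := (p/2)|e_1⟩⟨e_1| + ((1−p)/4)·I, σ_1^− := (p/2)|e_0⟩⟨e_0| + ((1−p)/4)·I, σ_2^+ := (p/2)|x_−⟩⟨x_−| + ((1−p)/4)·I, σ_2^− := (p/2)|x_+⟩⟨x_+| + ((1−p)/4)·I, where e_0 = (1,0), e_1 = (0,1) and x_± = (e_0 ± e_1)/√2 (this is the conditional-state assemblage obtained from measuring σ_z and σ_x on Alice's side of the two-qubit Werner state ρ_w = p|φ^−⟩⟨φ^−| + (1−p)·I/4). Then there exist no finite set Λ, weights p(λ) ≥ 0 with Σ_λ p(λ) = 1, numbers p_λ(a|x) ∈ [0,1] with Σ_{a∈{+,−}} p_λ(a|x) = 1 for x ∈ {1,2}, and 2×2 density matrices σ_λ such that Σ_λ p(λ) p_λ(a|x) σ_λ = σ_x^a for all x ∈ {1,2} and a ∈ {+,−}; i.e., the Werner state is steerable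 from Alice to Bob for p > 1/√2. -/
/-!
The proof evaluates a linear steering inequality. For a density matrix `ρ` on `ℂ²` put
`Z = ρ₁₁ - ρ₀₀` and `X = -2 Re ρ₀₁`; these are, up to sign, two coordinates of its Bloch vector,
so `Z² + X² ≤ 1` (`bloch_sq_le_one`, which is `det ρ ≥ 0` combined with `tr ρ = 1`).
In a local-hidden-state model let `A, B ∈ [-1, 1]` be the differences of the `+` and `-` response
probabilities for the two settings. By Cauchy–Schwarz each hidden state satisfies
`A Z + B X ≤ √2`, hence so does the average over the hidden variable. Read off from the assemblage,
that average equals `2p`, so `p ≤ 1/√2`.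
-/

open scoped ComplexOrder

noncomputable section

def e0 : Fin 2 → ℂ := ![1, 0]
def e1 : Fin 2 → ℂ := ![0, 1]
def xPlus : Fin 2 → ℂ := fun i => (e0 i + e1 i) / (Real.sqrt 2 : ℂ)
def xMinus : Fin 2 → ℂ := fun i => (e0 i - e1 i) / (Real.sqrt 2 : ℂ)

/-- The conditional-state assemblage obtained from measuring `σ_z` (setting `0`) and `σ_x`
(setting `1`) on Alice's side of the two-qubit Werner state; `true` is outcome `+`,
`false` is outcome `−`. -/
def wernerAssemblage (p : ℝ) : Fin 2 → Bool → Matrix (Fin 2) (Fin 2) ℂ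
  | 0, true  => ((p / 2 : ℝ) : ℂ) • rankOneProj e1 + (((1 - p) / 4 : ℝ) : ℂ) • 1
  | 0, false => ((p / 2 : ℝ) : ℂ) • rankOneProj e0 + (((1 - p) / 4 : ℝ) : ℂ) • 1
  | 1, true  => ((p / 2 : ℝ) : ℂ) • rankOneProj xMinus + (((1 - p) / 4 : ℝ) : ℂ) • 1
  | 1, false => ((p / 2 : ℝ) : ℂ) • rankOneProj xPlus + (((1 - p) / 4 : ℝ) : ℂ) • 1

/-- The Bloch vector of a qubit density matrix, projected to the `z`-`x` plane, lies in the
unit disc. -/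
lemma bloch_sq_le_one (ρ : Matrix (Fin 2) (Fin 2) ℂ) (h : IsDensityMatrix ρ) :
    ((ρ 1 1).re - (ρ 0 0).re) ^ 2 + ((ρ 0 1).re + (ρ 1 0).re) ^ 2 ≤ 1 := by
  obtain ⟨hpos, htr⟩ := h
  have hdet := hpos.det_nonneg
  have hre := congrArg Complex.re htr
  have h10 : star (ρ 0 1) = ρ 1 0 := hpos.isHermitian.apply 1 0
  have h00 : star (ρ 0 0) = ρ 0 0 := hpos.isHermitian.apply 0 0
  have i00 : (ρ 0 0).im = 0 := Complex.conj_eq_iff_im.mp h00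
  rw [Matrix.det_fin_two, ← h10, Complex.le_def] at hdet
  have hd := hdet.1
  simp only [Matrix.trace_fin_two, Complex.add_re, Complex.one_re] at hre
  simp [i00] at hd
  rw [← h10]
  simp only [Complex.star_def, Complex.conj_re]
  have : (ρ 1 1).re = 1 - (ρ 0 0).re := by linarith
  rw [this] at hd ⊢
  nlinarith [sq_nonneg (ρ 0 1).im]

lemma add_mul_le_sqrt_two {A B Z X : ℝ} (hA : A ^ 2 ≤ 1) (hB : B ^ 2 ≤ 1)
    (h : Z ^ 2 + X ^ 2 ≤ 1) : A * Z + B * X ≤ √2 := by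
  apply Real.le_sqrt_of_sq_le
  -- `(AZ + BX)² + (AX - BZ)² = (A² + B²)(Z² + X²)`
  nlinarith [sq_nonneg (A * X - B * Z), mul_nonneg (add_nonneg (sq_nonneg A) (sq_nonneg B))
    (sub_nonneg.mpr h)]

/-- The difference of the two outcomes of setting `x`, entrywise and in real parts, in terms of
the hidden-state model. -/
lemma re_assemblage_diff {Λ : Type} [Fintype Λ] {w : Λ → ℝ} {resp : Λ → Fin 2 → Bool → ℝ}
    {σ : Λ → Matrix (Fin 2) (Fin 2) ℂ} {p : ℝ}
    (h : ∀ x a, ∑ l, ((w l * resp l x a : ℝ) : ℂ) • σ l = wernerAssemblage p x a)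
    (x i j : Fin 2) :
    ∑ l, w l * (resp l x true - resp l x false) * (σ l i j).re =
      (wernerAssemblage p x true i j).re - (wernerAssemblage p x false i j).re := by
  rw [← h, ← h, Matrix.sum_apply, Matrix.sum_apply, Complex.re_sum, Complex.re_sum,
    ← Finset.sum_sub_distrib]
  refine Finset.sum_congr rfl fun l _ => ?_
  simp only [Matrix.smul_apply, smul_eq_mul, Complex.re_ofReal_mul]
  ring

lemma assemblage_z (p : ℝ) :
    ((wernerAssemblage p 0 true 1 1).re - (wernerAssemblage p 0 false 1 1).re) -
      ((wernerAssemblage p 0 true 0 0).re - (wernerAssemblage p 0 false 0 0).re) = p := by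
  simp only [wernerAssemblage, rankOneProj, Matrix.add_apply, Matrix.smul_apply,
    Matrix.vecMulVec_apply, Pi.star_apply, smul_eq_mul, Complex.add_re, Complex.re_ofReal_mul]
  simp [e0, e1]

lemma assemblage_x (p : ℝ) :
    ((wernerAssemblage p 1 true 0 1).re - (wernerAssemblage p 1 false 0 1).re) +
      ((wernerAssemblage p 1 true 1 0).re - (wernerAssemblage p 1 false 1 0).re) = -p := by
  have h2 : ((√2 : ℝ) : ℂ)⁻¹ * ((√2 : ℝ) : ℂ)⁻¹ = ((1 / 2 : ℝ) : ℂ) := by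
    rw [← mul_inv, ← Complex.ofReal_mul, Real.mul_self_sqrt (by norm_num)]
    norm_num
  have hm : ∀ i j, i ≠ j → (rankOneProj xMinus i j) = ((-(1 / 2) : ℝ) : ℂ) := by
    intro i j hij
    rw [Complex.ofReal_neg, ← h2]
    fin_cases i <;> fin_cases j <;>
      simp [rankOneProj, Matrix.vecMulVec_apply, xMinus, e0, e1, neg_div] at hij ⊢
  have hq : ∀ i j, i ≠ j → (rankOneProj xPlus i j) = ((1 / 2 : ℝ) : ℂ) := by
    intro i j hij
    rw [← h2]
    fin_cases i <;> fin_cases j <;>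
      simp [rankOneProj, Matrix.vecMulVec_apply, xPlus, e0, e1] at hij ⊢
  simp only [wernerAssemblage, Matrix.add_apply, Matrix.smul_apply, smul_eq_mul,
    hm 0 1 (by decide), hm 1 0 (by decide), hq 0 1 (by decide), hq 1 0 (by decide),
    Complex.add_re, Complex.re_ofReal_mul, Complex.ofReal_re]
  ring

/-- **The two-qubit Werner state is steerable from Alice to Bob for `p > 1/√2`:**
its `σ_z`/`σ_x` assemblage admits no local-hidden-state model. -/
theorem werner_steerable (p : ℝ) (hp₁ : 1 / Real.sqrt 2 < p) (hp₂ : p ≤ 1) :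
    ¬ ∃ (Λ : Type) (_ : Fintype Λ) (w : Λ → ℝ)
        (resp : Λ → Fin 2 → Bool → ℝ) (σ : Λ → Matrix (Fin 2) (Fin 2) ℂ),
      (∀ l, 0 ≤ w l) ∧ (∑ l, w l = 1) ∧
      (∀ l x a, 0 ≤ resp l x a ∧ resp l x a ≤ 1) ∧
      (∀ l x, resp l x true + resp l x false = 1) ∧
      (∀ l, IsDensityMatrix (σ l)) ∧
      (∀ x a, ∑ l, ((w l * resp l x a : ℝ) : ℂ) • σ l = wernerAssemblage p x a) := by
  rintro ⟨Λ, _, w, resp, σ, hw, hw1, hr, hrs, hσ, h⟩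
  have hz := assemblage_z p
  have hx := assemblage_x p
  simp only [← re_assemblage_diff h] at hz hx
  rw [← Finset.sum_sub_distrib] at hz
  rw [← Finset.sum_add_distrib] at hx
  have hsq : ∀ l x, (resp l x true - resp l x false) ^ 2 ≤ 1 := by
    intro l x
    have h1 := hr l x true
    have h2 := hrs l x
    have h3 := hr l x false
    rw [sq_le_one_iff_abs_le_one, abs_le]
    constructor <;> linarith
  have hle : ∀ l, w l * ((resp l 0 true - resp l 0 false) * ((σ l 1 1).re - (σ l 0 0).re) +
      (resp l 1 true - resp l 1 false) * (-((σ l 0 1).re + (σ l 1 0).re))) ≤ w l * √2 :=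
    fun l => mul_le_mul_of_nonneg_left (add_mul_le_sqrt_two (hsq l 0) (hsq l 1)
      (by rw [neg_sq]; exact bloch_sq_le_one _ (hσ l))) (hw l)
  have hsum := Finset.sum_le_sum fun l (_ : l ∈ Finset.univ) => hle l
  rw [← Finset.sum_mul, hw1, one_mul] at hsum
  have key : 2 * p ≤ √2 := by
    refine le_trans (le_of_eq ?_) hsum
    rw [two_mul]
    nth_rewrite 1 [← hz]
    rw [← neg_neg p, ← hx, ← sub_eq_add_neg, ← Finset.sum_sub_distrib]
    refine Finset.sum_congr rfl fun l _ => ?_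
    ring
  have h2 : √2 * √2 = 2 := Real.mul_self_sqrt (by norm_num)
  rw [div_lt_iff₀ (by positivity)] at hp₁
  nlinarith [Real.sqrt_nonneg 2]
end
end

section
/- Let e_0 = (1,0), e_1 = (0,1) and x_± = (e_0 ± e_1)/√2 in ℂ², and define the qubit projectors P_1^+ := |e_0⟩⟨e_0|, P_1^− := |e_1⟩⟨e_1|, P_2^+ := |x_+⟩⟨x_+|, P_2^− := |x_−⟩⟨x_−| (Alice) and Q_1^+ := |e_1⟩⟨e_1|, Q_1^− := |e_0⟩⟨e_0|, Q_2^+ := |x_−⟩⟨x_−|, Q_2^− := |x_+⟩⟨x_+| (Bob). Then: (1) for every finite set Λ, weights p(λ) ≥ 0 with Σ_λ p(λ) = 1, and 2×2 density matrices ρ_λ^A, ρ_λ^B, the 4×4 density matrix ρ := Σ_λ p(λ) ρ_λ^A ⊗ ρ_λ^B satisfies Σ_{x∈{1,2}} Σ_{a∈{+,−}} Tr((P_x^a ⊗ Q_x^a) ρ) ≤ 3 − √2; (2) the two-qubit Werner state ρ_w := p|φ^−⟩⟨φ^−| + (1−p)·I₄/4, with φ^− := (e_0 ⊗ e_1 −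 e_1 ⊗ e_0)/√2, satisfies Σ_{x,a} Tr((P_x^a ⊗ Q_x^a) ρ_w) = 1 + p; consequently, for p > 2 − √2 the Werner state ρ_w admits no decomposition ρ_w = Σ_λ p(λ) ρ_λ^A ⊗ ρ_λ^B, i.e., it is entangled. -/
/-!
Each of the four operators `P ⊗ Q` projects onto anticorrelated outcomes, so the functional is
`Re Tr((1 - (Z ⊗ Z + X ⊗ X) / 2) ρ)` with `Z`, `X` the Pauli matrices (`entFunctional_eq`).
On a product state it equals `1 - (z z' + x x') / 2` in terms of Bloch components. Bloch vectors
lie in the unit ball because a density matrix has nonnegative determinant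
(`IsDensityMatrix.bloch`), so the value is at most `3 / 2 ≤ 3 - √2`; by linearity the bound passes
to separable states. Evaluating the functional on the Werner state gives `1 + p`, which exceeds
`3 - √2` as soon as `p > 2 - √2`.
-/

open scoped ComplexOrder

noncomputable section

/-- Alice's projectors: setting `0` is `{|e0⟩⟨e0|, |e1⟩⟨e1|}`, setting `1` is
`{|x₊⟩⟨x₊|, |x₋⟩⟨x₋|}`; `true` is outcome `+`, `false` is outcome `−`. -/
def Aproj : Fin 2 → Bool → Matrix (Fin 2) (Fin 2) ℂ
  | 0, true  => rankOneProj e0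
  | 0, false => rankOneProj e1
  | 1, true  => rankOneProj xPlus
  | 1, false => rankOneProj xMinus

/-- Bob's projectors: setting `0` is `{|e1⟩⟨e1|, |e0⟩⟨e0|}`, setting `1` is
`{|x₋⟩⟨x₋|, |x₊⟩⟨x₊|}`. -/
def Bproj : Fin 2 → Bool → Matrix (Fin 2) (Fin 2) ℂ
  | 0, true  => rankOneProj e1
  | 0, false => rankOneProj e0
  | 1, true  => rankOneProj xMinus
  | 1, false => rankOneProj xPlus

/-- The singlet state vector `φ⁻ = (e0 ⊗ e1 − e1 ⊗ e0)/√2`. -/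
def phiMinus : Fin 2 × Fin 2 → ℂ :=
  fun q => (e0 q.1 * e1 q.2 - e1 q.1 * e0 q.2) / (Real.sqrt 2 : ℂ)

/-- The two-qubit Werner state `ρ_w = p|φ⁻⟩⟨φ⁻| + (1−p)·I₄/4`. -/
def wernerState (p : ℝ) : Matrix (Fin 2 × Fin 2) (Fin 2 × Fin 2) ℂ :=
  (p : ℂ) • rankOneProj phiMinus + (((1 - p) / 4 : ℝ) : ℂ) • 1

/-- The entanglement functional `Σ_{x,a} Tr((P_x^a ⊗ Q_x^a) ρ)`. -/
def entFunctional (ρ : Matrix (Fin 2 × Fin 2) (Fin 2 × Fin 2) ℂ) : ℝ :=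
  ∑ x : Fin 2, ∑ a : Bool,
    (Matrix.trace (Matrix.kroneckerMap (· * ·) (Aproj x a) (Bproj x a) * ρ)).re

/-- The functional in coordinates: it is `Re Tr((1 - (Z ⊗ Z + X ⊗ X) / 2) ρ)`, with `Z`, `X` the
Pauli matrices. -/
lemma entFunctional_eq (ρ : Matrix (Fin 2 × Fin 2) (Fin 2 × Fin 2) ℂ) :
    entFunctional ρ =
      ((ρ (0, 0) (0, 0)).re + 3 * (ρ (0, 1) (0, 1)).re + 3 * (ρ (1, 0) (1, 0)).re
        + (ρ (1, 1) (1, 1)).re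
        - (ρ (0, 0) (1, 1)).re - (ρ (1, 1) (0, 0)).re
        - (ρ (0, 1) (1, 0)).re - (ρ (1, 0) (0, 1)).re) / 2 := by
  have hs : (√2)⁻¹ * (√2)⁻¹ = (1 / 2 : ℝ) := by
    rw [← mul_inv, Real.mul_self_sqrt (by norm_num)]; norm_num
  have hc : ((√2 : ℝ) : ℂ)⁻¹ * ((√2 : ℝ) : ℂ)⁻¹ = ((1 / 2 : ℝ) : ℂ) := by
    rw [← hs]; push_cast; rfl
  have hP : rankOneProj xPlus = !![((1 / 2 : ℝ) : ℂ), ((1 / 2 : ℝ) : ℂ);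
      ((1 / 2 : ℝ) : ℂ), ((1 / 2 : ℝ) : ℂ)] := by
    ext i j
    fin_cases i <;> fin_cases j <;>
      simp [rankOneProj, Matrix.vecMulVec_apply, xPlus, e0, e1, hc]
  have hM : rankOneProj xMinus = !![((1 / 2 : ℝ) : ℂ), ((-1 / 2 : ℝ) : ℂ);
      ((-1 / 2 : ℝ) : ℂ), ((1 / 2 : ℝ) : ℂ)] := by
    ext i j
    fin_cases i <;> fin_cases j <;>
      simp [rankOneProj, Matrix.vecMulVec_apply, xMinus, e0, e1, hc, neg_div]
  have h0 : rankOneProj e0 = !![1, 0; 0, 0] := by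
    ext i j
    fin_cases i <;> fin_cases j <;> simp [rankOneProj, Matrix.vecMulVec_apply, e0]
  have h1 : rankOneProj e1 = !![0, 0; 0, 1] := by
    ext i j
    fin_cases i <;> fin_cases j <;> simp [rankOneProj, Matrix.vecMulVec_apply, e1]
  simp only [entFunctional, Fin.sum_univ_two, Fintype.sum_bool, Aproj, Bproj, hP, hM, h0, h1,
    Matrix.trace, Matrix.diag_apply, Matrix.mul_apply, Fintype.sum_prod_type,
    Matrix.kroneckerMap_apply, Matrix.of_apply, Matrix.cons_val_zero, Matrix.cons_val_one,
    Matrix.cons_val_fin_one, ← Complex.ofReal_mul, Complex.add_re, Complex.re_ofReal_mul,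
    mul_zero, zero_mul, mul_one, one_mul, Complex.zero_re]
  ring

/-- Positivity of the determinant places the Bloch vector of a qubit state in the unit ball; only
its `z` and `x` components are needed. -/
lemma IsDensityMatrix.bloch {ρ : Matrix (Fin 2) (Fin 2) ℂ} (h : IsDensityMatrix ρ) :
    (ρ 0 0).re + (ρ 1 1).re = 1 ∧ (ρ 0 0).im = 0 ∧ (ρ 1 1).im = 0 ∧
      (ρ 1 0).re = (ρ 0 1).re ∧ (ρ 1 0).im = -(ρ 0 1).im ∧
      ((ρ 0 0).re - (ρ 1 1).re) ^ 2 + (2 * (ρ 0 1).re) ^ 2 ≤ 1 := by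
  obtain ⟨hpos, htr⟩ := h
  have hH := hpos.isHermitian
  have h00 : (ρ 0 0).im = 0 := by
    have := congrArg Complex.im (hH.apply 0 0)
    simp at this; linarith
  have h11 : (ρ 1 1).im = 0 := by
    have := congrArg Complex.im (hH.apply 1 1)
    simp at this; linarith
  have hre : (ρ 1 0).re = (ρ 0 1).re := by
    have := congrArg Complex.re (hH.apply 0 1)
    simpa using this
  have him : (ρ 1 0).im = -(ρ 0 1).im := by
    have := congrArg Complex.im (hH.apply 0 1)
    simp at this; linarith
  have ht : (ρ 0 0).re + (ρ 1 1).re = 1 := by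
    have := congrArg Complex.re htr
    simpa [Matrix.trace_fin_two] using this
  have hd := (Complex.le_def.1 hpos.det_nonneg).1
  simp only [Matrix.det_fin_two, Complex.sub_re, Complex.mul_re, Complex.zero_re, h00, h11, hre,
    him] at hd
  refine ⟨ht, h00, h11, hre, him, ?_⟩
  nlinarith [sq_nonneg (ρ 0 1).im]

/-- On a product state the functional is `1 - (z z' + x x') / 2`, where `(z, x)` and `(z', x')` are
Bloch components; Cauchy–Schwarz in the unit disc bounds it by `3 / 2`. -/
lemma entFunctional_kronecker_le {A B : Matrix (Fin 2) (Fin 2) ℂ}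
    (hA : IsDensityMatrix A) (hB : IsDensityMatrix B) :
    entFunctional (Matrix.kroneckerMap (· * ·) A B) ≤ 3 / 2 := by
  obtain ⟨a1, a2, a3, a4, a5, a6⟩ := hA.bloch
  obtain ⟨b1, b2, b3, b4, b5, b6⟩ := hB.bloch
  rw [entFunctional_eq]
  simp only [Matrix.kroneckerMap_apply, Complex.mul_re, a2, a3, a4, a5, b2, b3, b4, b5]
  have ha : (A 1 1).re = 1 - (A 0 0).re := by linarith
  have hb : (B 1 1).re = 1 - (B 0 0).re := by linarith
  rw [ha] at a6 ⊢
  rw [hb] at b6 ⊢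
  nlinarith [sq_nonneg ((2 * (A 0 0).re - 1) + (2 * (B 0 0).re - 1)),
    sq_nonneg ((A 0 1).re + (B 0 1).re)]

lemma entFunctional_sum {Λ : Type} [Fintype Λ] (w : Λ → ℝ)
    (M : Λ → Matrix (Fin 2 × Fin 2) (Fin 2 × Fin 2) ℂ) :
    entFunctional (∑ l, ((w l : ℝ) : ℂ) • M l) = ∑ l, w l * entFunctional (M l) := by
  simp only [entFunctional, Matrix.trace_sum, Matrix.mul_smul, Matrix.trace_smul,
    Complex.re_sum, smul_eq_mul, Complex.re_ofReal_mul, Finset.mul_sum]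
  simp only [Fintype.sum_bool, Fin.sum_univ_two, Finset.sum_add_distrib]

lemma entFunctional_separable_le {Λ : Type} [Fintype Λ] {w : Λ → ℝ}
    {ρA ρB : Λ → Matrix (Fin 2) (Fin 2) ℂ} (hw : ∀ l, 0 ≤ w l) (hsum : ∑ l, w l = 1)
    (hA : ∀ l, IsDensityMatrix (ρA l)) (hB : ∀ l, IsDensityMatrix (ρB l)) :
    entFunctional (∑ l, ((w l : ℝ) : ℂ) • Matrix.kroneckerMap (· * ·) (ρA l) (ρB l))
      ≤ 3 - Real.sqrt 2 := by
  rw [entFunctional_sum]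
  have h1 : ∑ l, w l * entFunctional (Matrix.kroneckerMap (· * ·) (ρA l) (ρB l))
      ≤ ∑ l, w l * (3 / 2) :=
    Finset.sum_le_sum fun l _ =>
      mul_le_mul_of_nonneg_left (entFunctional_kronecker_le (hA l) (hB l)) (hw l)
  rw [← Finset.sum_mul, hsum] at h1
  -- `3 / 2 ≤ 3 - √2`: the claimed bound leaves slack.
  have h2 : Real.sqrt 2 ≤ 3 / 2 := Real.sqrt_le_iff.2 ⟨by norm_num, by norm_num⟩
  linarith

lemma entFunctional_wernerState (p : ℝ) : entFunctional (wernerState p) = 1 + p := by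
  have hc : ((√2 : ℝ) : ℂ)⁻¹ * ((√2 : ℝ) : ℂ)⁻¹ = ((1 / 2 : ℝ) : ℂ) := by
    rw [← Complex.ofReal_inv, ← Complex.ofReal_mul, ← mul_inv, Real.mul_self_sqrt (by norm_num)]
    norm_num
  have hre : ((√2 : ℝ) : ℂ)⁻¹ * ((√2 : ℝ) : ℂ)⁻¹ = 2⁻¹ := by rw [hc]; norm_num
  rw [entFunctional_eq]
  simp [wernerState, rankOneProj, Matrix.vecMulVec_apply, phiMinus, e0, e1, neg_div, hre]
  ring

/-- **Entanglement of the two-qubit Werner state for `p > 2 − √2`:**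
(1) every separable state satisfies the bound `3 − √2`; (2) the Werner state attains `1 + p`;
consequently, for `p > 2 − √2` the Werner state admits no separable decomposition. -/
theorem werner_entangled :
    (∀ (Λ : Type) (_ : Fintype Λ) (w : Λ → ℝ)
        (ρA ρB : Λ → Matrix (Fin 2) (Fin 2) ℂ),
      (∀ l, 0 ≤ w l) → (∑ l, w l = 1) →
      (∀ l, IsDensityMatrix (ρA l)) → (∀ l, IsDensityMatrix (ρB l)) →
      entFunctional (∑ l, ((w l : ℝ) : ℂ) • Matrix.kroneckerMap (· * ·) (ρA l) (ρB l))
        ≤ 3 - Real.sqrt 2) ∧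
    (∀ p : ℝ, entFunctional (wernerState p) = 1 + p) ∧
    (∀ p : ℝ, 2 - Real.sqrt 2 < p →
      ¬ ∃ (Λ : Type) (_ : Fintype Λ) (w : Λ → ℝ)
          (ρA ρB : Λ → Matrix (Fin 2) (Fin 2) ℂ),
        (∀ l, 0 ≤ w l) ∧ (∑ l, w l = 1) ∧
        (∀ l, IsDensityMatrix (ρA l)) ∧ (∀ l, IsDensityMatrix (ρB l)) ∧
        wernerState p = ∑ l, ((w l : ℝ) : ℂ) • Matrix.kroneckerMap (· * ·) (ρA l) (ρB l)) := by
  refine ⟨fun Λ _ w ρA ρB hw hsum hA hB => entFunctional_separable_le hw hsum hA hB,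
    entFunctional_wernerState, ?_⟩
  rintro p hp ⟨Λ, _, w, ρA, ρB, hw, hsum, hA, hB, hρ⟩
  have h := entFunctional_separable_le hw hsum hA hB
  rw [← hρ, entFunctional_wernerState] at h
  linarith
end
end
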